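/- Let F₃ be the free group on three generators q, a, b, and let K be the subgroup of F₃ generated by a and b (a free group of rank 2). For w₁, w₂ ∈ K, the map q ↦ w₁⁻¹ q w₂, a ↦ a, b ↦ b extends to an automorphism of F₃, and the resulting map K × K → Aut(F₃), (w₁, w₂) ↦ (q ↦ w₁⁻¹ q w₂, a ↦ a, b ↦ b), is an injective group homomorphism. -/

import Mathlib

/-- The subgroup of the free group `F₃ = ⟨q, a, b⟩` generated by `a` and `b`
(here `q = of 0`, `a = of 1`, `b = of 2`). -/
def Kab : Subgroup (FreeGroup (Fin 3)) :=
  Subgroup.closure {FreeGroup.of 1, FreeGroup.of 2}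

/-! The endomorphism `q ↦ w₁⁻¹ q w₂` fixes `K` pointwise, so composing two of these multiplies their
parameters; in particular each is invertible. For injectivity, suppose `w₁⁻¹ q w₂ = q`, i.e.
`q w₂ = w₁ q`, and let the free group act on itself together with an extra point `∞`: the
generators of `K` act by left translation and fix `∞`, while `q` exchanges `∞` with `1`. Then
`q w₂` sends `∞` to `1` and `w₁ q` sends `∞` to `w₁`, so `w₁ = 1`, and hence `w₂ = 1`. -/

open FreeGroup (lift of)

section UpdateHom

variable {α G : Type*} [Group G]

/-- The free factor of `FreeGroup α` generated by all the free generators other than `of i`. -/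
def complFactor (i : α) : Subgroup (FreeGroup α) :=
  Subgroup.closure (of '' {i}ᶜ)

variable [DecidableEq α]

/-- The homomorphism that agrees with `φ` on the generators other than `of i` and sends `of i`
to `g`. -/
def updateHom (φ : FreeGroup α →* G) (i : α) (g : G) : FreeGroup α →* G :=
  lift (Function.update (φ ∘ of) i g)

variable (φ : FreeGroup α →* G) (i : α) (g : G)

theorem updateHom_of_self : updateHom φ i g (of i) = g := by
  simp [updateHom]

variable {i}

theorem updateHom_of_ne {j : α} (hj : j ≠ i) : updateHom φ i g (of j) = φ (of j) := by
  simp [updateHom, hj]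

theorem updateHom_eq_of_mem_complFactor {w : FreeGroup α} (hw : w ∈ complFactor i) :
    updateHom φ i g w = φ w := by
  refine MonoidHom.eqOn_closure ?_ hw
  rintro _ ⟨j, hj, rfl⟩
  exact updateHom_of_ne φ g hj

variable {φ g}

theorem eq_updateHom {ψ : FreeGroup α →* G} (h_self : ψ (of i) = g)
    (h_ne : ∀ j ≠ i, ψ (of j) = φ (of j)) : ψ = updateHom φ i g := by
  ext j
  obtain rfl | hj := eq_or_ne j i
  · rw [h_self, updateHom_of_self]
  · rw [h_ne j hj, updateHom_of_ne φ g hj]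

end UpdateHom

section Twist

variable {α : Type*} [DecidableEq α]

/-- The endomorphism of `FreeGroup α` sending the generator `q = of i` to `u⁻¹ * q * v` and fixing
all the other generators. -/
def twistEnd (i : α) (u v : FreeGroup α) : FreeGroup α →* FreeGroup α :=
  updateHom (MonoidHom.id _) i (u⁻¹ * of i * v)

variable (i : α)

theorem twistEnd_of_self (u v : FreeGroup α) : twistEnd i u v (of i) = u⁻¹ * of i * v :=
  updateHom_of_self _ i _

theorem twistEnd_one_one : twistEnd i 1 1 = MonoidHom.id _ :=
  (eq_updateHom (by simp) fun _ _ => rfl).symm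

variable {i}

theorem twistEnd_of_ne (u v : FreeGroup α) {j : α} (hj : j ≠ i) :
    twistEnd i u v (of j) = of j :=
  updateHom_of_ne _ _ hj

theorem twistEnd_eq_of_mem_complFactor (u v : FreeGroup α) {w : FreeGroup α}
    (hw : w ∈ complFactor i) : twistEnd i u v w = w :=
  updateHom_eq_of_mem_complFactor _ _ hw

theorem twistEnd_comp_twistEnd (u v : FreeGroup α) {s t : FreeGroup α} (hs : s ∈ complFactor i)
    (ht : t ∈ complFactor i) :
    (twistEnd i u v).comp (twistEnd i s t) = twistEnd i (u * s) (v * t) := by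
  refine eq_updateHom ?_ fun j hj => ?_
  · calc twistEnd i u v (twistEnd i s t (of i))
        = s⁻¹ * (u⁻¹ * of i * v) * t := by
          simp only [twistEnd_of_self, map_mul, map_inv, twistEnd_eq_of_mem_complFactor u v hs,
            twistEnd_eq_of_mem_complFactor u v ht]
      _ = (u * s)⁻¹ * of i * (v * t) := by group
  · rw [MonoidHom.comp_apply, twistEnd_of_ne s t hj, twistEnd_of_ne u v hj, MonoidHom.id_apply]

variable (i)

/-- The action of `complFactor i × complFactor i` on `FreeGroup α` in which `(u, v)` sends the
generator `q = of i` to `u⁻¹ * q * v` and fixes all the other generators. -/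
def twistHom : complFactor i × complFactor i →* MulAut (FreeGroup α) :=
  MonoidHom.mk'
    (fun w => MonoidHom.toMulEquiv (twistEnd i w.1 w.2) (twistEnd i (w.1 : FreeGroup α)⁻¹ w.2⁻¹)
      (by simp [twistEnd_comp_twistEnd _ _ w.1.2 w.2.2, twistEnd_one_one])
      (by simp [twistEnd_comp_twistEnd, twistEnd_one_one]))
    fun w z => MulEquiv.ext fun x =>
      (DFunLike.congr_fun (twistEnd_comp_twistEnd (w.1 : FreeGroup α) w.2 z.1.2 z.2.2) x).symm

theorem twistHom_apply (w : complFactor i × complFactor i) (x : FreeGroup α) :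
    twistHom i w x = twistEnd i w.1 w.2 x :=
  rfl

end Twist

section Injectivity

variable {α : Type*}

/-- The action of `FreeGroup α` on itself with a point `none` adjoined, in which the generators
other than `of i` act by left translation and `of i` exchanges `none` with `1`. It separates the
left and right multiples of `of i` by elements of `complFactor i`. -/
def pointedTranslation [DecidableEq α] (i : α) : FreeGroup α →* Equiv.Perm (Option (FreeGroup α)) :=
  updateHom (MulAction.toPermHom _ _) i (Equiv.swap none (some 1))

variable {i : α}

theorem pointedTranslation_of_self_none [DecidableEq α] :
    pointedTranslation i (of i) none = some 1 := by
  rw [pointedTranslation, updateHom_of_self, Equiv.swap_apply_left]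

theorem pointedTranslation_eq_smul [DecidableEq α] {w : FreeGroup α}
    (hw : w ∈ complFactor i) (x : Option (FreeGroup α)) : pointedTranslation i w x = w • x := by
  rw [pointedTranslation, updateHom_eq_of_mem_complFactor _ _ hw, MulAction.toPermHom_apply,
    MulAction.toPerm_apply]

theorem eq_one_of_of_mul_eq_mul_of {u v : FreeGroup α} (hu : u ∈ complFactor i)
    (hv : v ∈ complFactor i) (h : of i * v = u * of i) : u = 1 ∧ v = 1 := by
  classical
  have hu_one : u = 1 := by
    have h_none := DFunLike.congr_fun (congrArg (pointedTranslation i) h) none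
    simpa [pointedTranslation_eq_smul hu, pointedTranslation_eq_smul hv,
      pointedTranslation_of_self_none] using h_none.symm
  exact ⟨hu_one, by simpa [hu_one] using h⟩

theorem twistHom_injective [DecidableEq α] (i : α) : Function.Injective (twistHom i) := by
  refine (injective_iff_map_eq_one _).2 fun w hw => ?_
  have h_fix : (w.1 : FreeGroup α)⁻¹ * of i * w.2 = of i := by
    rw [← twistEnd_of_self, ← twistHom_apply, hw, MulAut.one_apply]
  rw [mul_assoc, inv_mul_eq_iff_eq_mul] at h_fix
  obtain ⟨hu, hv⟩ := eq_one_of_of_mul_eq_mul_of w.1.2 w.2.2 h_fix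
  exact Prod.ext (Subtype.ext hu) (Subtype.ext hv)

end Injectivity

theorem Kab_eq_complFactor : Kab = complFactor 0 := by
  have h_gens : ({0}ᶜ : Set (Fin 3)) = {1, 2} := by ext j; fin_cases j <;> simp
  rw [Kab, complFactor, h_gens, Set.image_pair]

theorem exists_injective_hom_KxK_to_autF3_general {α : Type*} (i : α) :
    ∃ Θ : (complFactor i × complFactor i) →* MulAut (FreeGroup α),
      Function.Injective Θ ∧
        ∀ w : complFactor i × complFactor i,
          Θ w (of i) = (w.1 : FreeGroup α)⁻¹ * of i * (w.2 : FreeGroup α) ∧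
            ∀ j ≠ i, Θ w (of j) = of j := by
  classical
  exact ⟨twistHom i, twistHom_injective i, fun w =>
    ⟨twistEnd_of_self i w.1 w.2, fun j hj => twistEnd_of_ne (w.1 : FreeGroup α) w.2 hj⟩⟩

/-- Let `F₃` be free on `q, a, b` and `K = ⟨a, b⟩`. For `w₁, w₂ ∈ K` the assignment
`q ↦ w₁⁻¹ q w₂`, `a ↦ a`, `b ↦ b` extends to an automorphism of `F₃`, and the resulting
map `K × K → Aut(F₃)` is an injective group homomorphism. -/
theorem exists_injective_hom_KxK_to_autF3 :
    ∃ Θ : (Kab × Kab) →* MulAut (FreeGroup (Fin 3)),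
      Function.Injective Θ ∧
        ∀ w : Kab × Kab,
          Θ w (FreeGroup.of 0) =
              (w.1 : FreeGroup (Fin 3))⁻¹ * FreeGroup.of 0 * (w.2 : FreeGroup (Fin 3)) ∧
            Θ w (FreeGroup.of 1) = FreeGroup.of 1 ∧
            Θ w (FreeGroup.of 2) = FreeGroup.of 2 := by
  obtain ⟨Θ, hΘ, h⟩ := exists_injective_hom_KxK_to_autF3_general (0 : Fin 3)
  rw [Kab_eq_complFactor]
  exact ⟨Θ, hΘ, fun w => ⟨(h w).1, (h w).2 1 (by decide), (h w).2 2 (by decide)⟩⟩
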